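/- The set F_8 = {c ∈ L_8 : ⟨k_8,c⟩ = −2 and ⟨c,c⟩ = 0} has exactly 2160 elements. (This is the source of the bound in the paper's Corollary on simple family graphs: the simple family graph of a real weak del Pezzo surface has at most 2160 vertices.) -/

import Mathlib

/-- The intersection form on the Neron-Severi lattice `L_r = ℤ^(r+1)` of a weak del Pezzo
surface of degree `9 - r` in a type 1 basis: `⟨v,w⟩ = v₀w₀ - v₁w₁ - ⋯ - vᵣwᵣ`. -/
def nsForm (r : ℕ) (v w : Fin (r + 1) → ℤ) : ℤ :=
  v 0 * w 0 - ∑ i : Fin r, v i.succ * w i.succ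

/-- The canonical class `k_r = -3e₀ + e₁ + ⋯ + e_r`. -/
def canK (r : ℕ) : Fin (r + 1) → ℤ := fun i => if i = 0 then -3 else 1

/-- The standard basis vector `e_j` of `L_r`. -/
def eVec (r : ℕ) (j : Fin (r + 1)) : Fin (r + 1) → ℤ := fun i => if i = j then 1 else 0

/-- The set of (-2)-classes `R_r = {c : ⟨k_r,c⟩ = 0, ⟨c,c⟩ = -2}`. -/
def Rset (r : ℕ) : Set (Fin (r + 1) → ℤ) :=
  {c | nsForm r (canK r) c = 0 ∧ nsForm r c c = -2}

/-- The set of (-1)-classes `E_r = {c : ⟨k_r,c⟩ = -1, ⟨c,c⟩ = -1}`. -/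
def Eset (r : ℕ) : Set (Fin (r + 1) → ℤ) :=
  {c | nsForm r (canK r) c = -1 ∧ nsForm r c c = -1}

/-- The set of minimal-family classes `F_r = {c : ⟨k_r,c⟩ = -2, ⟨c,c⟩ = 0}`. -/
def Fset (r : ℕ) : Set (Fin (r + 1) → ℤ) :=
  {c | nsForm r (canK r) c = -2 ∧ nsForm r c c = 0}

/-!
The class `k = k₈` has `⟨k, k⟩ = 1`, so `L₈ = ℤk ⊕ k^⊥`, and `k^⊥` is the root lattice `E₈` with the
sign of its form reversed. Projecting to `k^⊥` turns `F₈` into the vectors of norm `4` of `E₈`.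
In coordinates adapted to the sublattice `A₈ ⊂ E₈` and multiplied by `3`, these are the vectors in
`ℤ⁹` with coordinate sum `0` and square sum `36` whose coordinates agree modulo `3`. By
Cauchy-Schwarz the coordinates lie in `[-5, 5]`, and up to order and sign such a vector is
`(3², 0⁵, (-3)²)`, `(4, 1⁴, (-2)⁴)` or `(-5, -2, 1⁷)`; hence there are
`756 + 2 * (630 + 72) = 2160` of them.
-/

open Finset Fintype

-- Both sides are the coefficient of `m` in the power `(∑ a ∈ s, X ^ g a) ^ card ι`.
theorem card_filter_piFinset_sum_eq {ι α M : Type*} [Fintype ι] [DecidableEq ι] [DecidableEq α]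
    [AddCommMonoid M] [DecidableEq M] (s : Finset α) (g : α → M) (m : M) :
    #{f ∈ piFinset fun _ : ι => s | ∑ i, g (f i) = m} =
      ∑ k ∈ piAntidiag s (card ι) with ∑ a ∈ s, k a • g a = m, Nat.multinomial s k := by
  let X (a : M) : AddMonoidAlgebra ℕ M := AddMonoidAlgebra.single a 1
  have expand_functions : (∑ a ∈ s, X (g a)) ^ card ι =
      ∑ f ∈ piFinset fun _ : ι => s, X (∑ i, g (f i)) := by
    rw [← card_univ, ← prod_const, prod_univ_sum]
    refine sum_congr rfl fun f _ => ?_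
    simp only [X, AddMonoidAlgebra.prod_single, prod_const_one]
  have expand_multinomial : (∑ a ∈ s, X (g a)) ^ card ι =
      ∑ k ∈ piAntidiag s (card ι), Nat.multinomial s k • X (∑ a ∈ s, k a • g a) := by
    rw [sum_pow_eq_sum_piAntidiag]
    refine sum_congr rfl fun k _ => ?_
    simp only [X, AddMonoidAlgebra.single_pow, AddMonoidAlgebra.prod_single, one_pow,
      prod_const_one, nsmul_eq_mul]
  have coeff_eq := congrArg (fun p : AddMonoidAlgebra ℕ M => p.coeff m)
    (expand_functions.symm.trans expand_multinomial)
  simp only [X, AddMonoidAlgebra.smul_single, AddMonoidAlgebra.coeff_sum,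
    AddMonoidAlgebra.coeff_single, Finsupp.finsetSum_apply, Finsupp.single_apply, smul_eq_mul,
    mul_one] at coeff_eq
  rwa [card_filter, sum_filter]

theorem card_mul_sq_le_of_sum_eq_zero {ι R : Type*} [CommRing R] [LinearOrder R]
    [IsStrictOrderedRing R] {s : Finset ι} {f : ι → R} (hf : ∑ i ∈ s, f i = 0) {i : ι}
    (hi : i ∈ s) : #s * f i ^ 2 ≤ (#s - 1) * ∑ j ∈ s, f j ^ 2 := by
  classical
  have sum_erase : ∑ j ∈ s.erase i, f j = -f i := by
    rw [sum_erase_eq_sub hi, hf, zero_sub]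
  have cauchy_schwarz := sq_sum_le_card_mul_sum_sq (s := s.erase i) (f := f)
  rw [sum_erase, sum_erase_eq_sub hi, cast_card_erase_of_mem hi] at cauchy_schwarz
  linear_combination cauchy_schwarz

/-- The vectors of norm `N / 9` in the root lattice `E₈`, realised in the hyperplane of zero
coordinate sum of `ℚ⁹` as the union of the translates of `A₈` by multiples of
`(1/3, …, 1/3) - (0, …, 0, 1, 1, 1)`. All coordinates are multiplied by `3`, to make them
integers. -/
def e8Shell (N : ℤ) : Set (Fin 9 → ℤ) :=
  {u | ∑ i, u i = 0 ∧ ∑ i, u i ^ 2 = N ∧ ∀ i, u i ≡ u 0 [ZMOD 3]}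

/-- The integers in `[-b, b]` with remainder `r` modulo `3`, i.e. the candidates for the
coordinates of a vector of `e8Shell N` in one residue class, when `b` bounds all coordinates. -/
noncomputable def residueWindow (b r : ℤ) : Finset ℤ :=
  {z ∈ Icc (-b) b | z % 3 = r}

/-- The part of `e8Shell N` lying in the cube `[-b, b]⁹` with all coordinates congruent to `r`
modulo `3`; for fixed `b` it is finite by construction. -/
noncomputable def residueShell (N b r : ℤ) : Finset (Fin 9 → ℤ) :=
  {u ∈ piFinset fun _ => residueWindow b r | ∑ i, (u i, u i ^ 2) = (0, N)}

theorem mem_residueShell {N b r : ℤ} {u : Fin 9 → ℤ} :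
    u ∈ residueShell N b r ↔
      (∀ i, u i ∈ Icc (-b) b ∧ u i % 3 = r) ∧ ∑ i, u i = 0 ∧ ∑ i, u i ^ 2 = N := by
  simp only [residueShell, residueWindow, mem_filter, mem_piFinset, Prod.ext_iff, Prod.fst_sum,
    Prod.snd_sum]

theorem card_residueShell (N b r : ℤ) :
    #(residueShell N b r) =
      ∑ k ∈ piAntidiag (residueWindow b r) 9 with
        ∑ z ∈ residueWindow b r, k z • (z, z ^ 2) = (0, N),
          Nat.multinomial (residueWindow b r) k :=
  card_filter_piFinset_sum_eq (ι := Fin 9) (residueWindow b r) (fun z => (z, z ^ 2)) (0, N)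

theorem mem_Icc_of_mem_e8Shell {N b : ℤ} (hb : 0 ≤ b) (hN : 8 * N < 9 * (b + 1) ^ 2)
    {u : Fin 9 → ℤ} (hu : u ∈ e8Shell N) (i : Fin 9) : u i ∈ Icc (-b) b := by
  obtain ⟨sum_zero, sum_sq, -⟩ := hu
  have sq_le : 9 * u i ^ 2 ≤ 8 * N := by
    simpa [sum_sq] using card_mul_sq_le_of_sum_eq_zero sum_zero (mem_univ i)
  have abs_lt : |u i| < b + 1 := abs_lt_of_sq_lt_sq (by linarith) (by linarith)
  rw [Finset.mem_Icc, ← abs_le]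
  exact Int.lt_add_one_iff.mp abs_lt

theorem e8Shell_eq_biUnion {N b : ℤ} (hb : 0 ≤ b) (hN : 8 * N < 9 * (b + 1) ^ 2) :
    e8Shell N = (({0, 1, 2} : Finset ℤ).biUnion (residueShell N b) : Finset (Fin 9 → ℤ)) := by
  ext u
  simp only [mem_coe, mem_biUnion, mem_residueShell]
  constructor
  · intro hu
    exact ⟨u 0 % 3, by simp only [mem_insert, mem_singleton]; omega,
      fun i => ⟨mem_Icc_of_mem_e8Shell hb hN hu i, hu.2.2 i⟩, hu.1, hu.2.1⟩
  · rintro ⟨r, -, hr, sum_zero, sum_sq⟩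
    exact ⟨sum_zero, sum_sq, fun i => (hr i).2.trans (hr 0).2.symm⟩

theorem ncard_e8Shell {N b : ℤ} (hb : 0 ≤ b) (hN : 8 * N < 9 * (b + 1) ^ 2) :
    (e8Shell N).ncard = ∑ r ∈ {0, 1, 2}, #(residueShell N b r) := by
  rw [e8Shell_eq_biUnion hb hN, Set.ncard_coe_finset, card_biUnion]
  intro r _ r' _ hne
  refine Finset.disjoint_left.mpr fun u hu hu' => ?_
  exact hne (((mem_residueShell.mp hu).1 0).2.symm.trans ((mem_residueShell.mp hu').1 0).2)

-- The only possible multiplicities of the values `-3, 0, 3` are `2, 5, 2`.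
theorem card_residueShell_zero : #(residueShell 36 5 0) = 756 := by
  have window_eq : residueWindow 5 0 = {-3, 0, 3} := rfl
  rw [card_residueShell, window_eq]
  decide +kernel

-- The multiplicities of `-5, -2, 1, 4` are `0, 4, 4, 1` (630 vectors) or `1, 1, 7, 0` (72 vectors).
theorem card_residueShell_one : #(residueShell 36 5 1) = 702 := by
  have window_eq : residueWindow 5 1 = {-5, -2, 1, 4} := rfl
  rw [card_residueShell, window_eq]
  decide +kernel

theorem card_residueShell_two : #(residueShell 36 5 2) = 702 := by
  have window_eq : residueWindow 5 2 = {-4, -1, 2, 5} := rfl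
  rw [card_residueShell, window_eq]
  decide +kernel

theorem ncard_e8Shell_thirtySix : (e8Shell 36).ncard = 2160 := by
  -- Rewriting under the sum keeps the kernel from enumerating `residueShell` to add cardinalities.
  have card_eq (r : ℤ) (hr : r ∈ ({0, 1, 2} : Finset ℤ)) :
      #(residueShell 36 5 r) = if r = 0 then 756 else 702 := by
    simp only [mem_insert, mem_singleton] at hr
    obtain rfl | rfl | rfl := hr
    exacts [card_residueShell_zero, card_residueShell_one, card_residueShell_two]
  rw [ncard_e8Shell (N := 36) (b := 5) (by norm_num) (by norm_num), sum_congr rfl card_eq]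
  rfl

theorem nsForm_canK (r : ℕ) (c : Fin (r + 1) → ℤ) :
    nsForm r (canK r) c = -3 * c 0 - ∑ i : Fin r, c i.succ := by
  simp [nsForm, canK, Fin.succ_ne_zero]

/-- Three times the projection of a class in `L₈` to the orthogonal complement of `k₈`, in the
coordinates of `e8Shell`. -/
def e8Coords (c : Fin 9 → ℤ) : Fin 9 → ℤ :=
  Fin.cons (c 0 + 3 * nsForm 8 (canK 8) c) fun i => 3 * c i.succ + c 0

theorem sum_e8Coords (c : Fin 9 → ℤ) : ∑ i, e8Coords c i = 0 := by
  simp only [e8Coords, Fin.sum_univ_succ (n := 8), Fin.cons_zero, Fin.cons_succ, nsForm_canK,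
    sum_add_distrib, ← mul_sum, sum_const, card_univ, Fintype.card_fin]
  ring

theorem sum_sq_e8Coords (c : Fin 9 → ℤ) :
    ∑ i, e8Coords c i ^ 2 = 9 * (nsForm 8 (canK 8) c ^ 2 - nsForm 8 c c) := by
  have sum_sq_tail : ∑ i : Fin 8, (3 * c i.succ + c 0) ^ 2 =
      9 * ∑ i : Fin 8, c i.succ * c i.succ + 6 * c 0 * ∑ i : Fin 8, c i.succ + 8 * c 0 ^ 2 := by
    simp only [Fin.sum_univ_eight]
    ring
  simp only [e8Coords, Fin.sum_univ_succ (n := 8), Fin.cons_zero, Fin.cons_succ, sum_sq_tail,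
    nsForm_canK]
  rw [nsForm]
  ring

theorem e8Coords_modEq (c : Fin 9 → ℤ) (i : Fin 9) : e8Coords c i ≡ e8Coords c 0 [ZMOD 3] := by
  cases i using Fin.cases with
  | zero => rfl
  | succ i =>
    simp only [e8Coords, Fin.cons_zero, Fin.cons_succ, Int.ModEq]
    omega

theorem injOn_e8Coords (d : ℤ) : Set.InjOn e8Coords {c | nsForm 8 (canK 8) c = d} := by
  intro c hc c' hc' h
  have head_eq : c 0 = c' 0 := by
    have := congrFun h 0
    simp only [e8Coords, Fin.cons_zero, hc.out, hc'.out] at this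
    linarith
  funext i
  cases i using Fin.cases with
  | zero => exact head_eq
  | succ i =>
    have := congrFun h i.succ
    simp only [e8Coords, Fin.cons_succ] at this
    linarith

theorem exists_e8Coords_eq (d : ℤ) {u : Fin 9 → ℤ} (sum_zero : ∑ i, u i = 0)
    (modEq : ∀ i, u i ≡ u 0 [ZMOD 3]) : ∃ c, nsForm 8 (canK 8) c = d ∧ e8Coords c = u := by
  choose w hw using fun i : Fin 8 => (modEq i.succ).symm.dvd
  have tail_eq (i : Fin 8) : u i.succ = u 0 + 3 * w i := by linarith [hw i]
  let c : Fin 9 → ℤ := Fin.cons (u 0 - 3 * d) fun i => w i + d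
  have degree_eq : nsForm 8 (canK 8) c = d := by
    have sum_w : 9 * u 0 + 3 * ∑ i, w i = 0 := by
      simp only [Fin.sum_univ_succ (n := 8), tail_eq, sum_add_distrib, ← mul_sum, sum_const,
        card_univ, Fintype.card_fin] at sum_zero
      linear_combination sum_zero
    simp only [nsForm_canK, c, Fin.cons_zero, Fin.cons_succ, sum_add_distrib, sum_const, card_univ,
      Fintype.card_fin, nsmul_eq_mul, Nat.cast_ofNat]
    linarith
  refine ⟨c, degree_eq, ?_⟩
  funext i
  cases i using Fin.cases with
  | zero => simp [e8Coords, degree_eq, c]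
  | succ i => simp only [e8Coords, c, Fin.cons_zero, Fin.cons_succ, tail_eq]; ring

theorem bijOn_e8Coords (d q : ℤ) :
    Set.BijOn e8Coords {c | nsForm 8 (canK 8) c = d ∧ nsForm 8 c c = q}
      (e8Shell (9 * (d ^ 2 - q))) := by
  refine ⟨?_, (injOn_e8Coords d).mono fun c hc => hc.1, ?_⟩
  · rintro c ⟨rfl, rfl⟩
    exact ⟨sum_e8Coords c, sum_sq_e8Coords c, e8Coords_modEq c⟩
  · rintro u ⟨sum_zero, sum_sq, modEq⟩
    obtain ⟨c, rfl, rfl⟩ := exists_e8Coords_eq d sum_zero modEq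
    rw [sum_sq_e8Coords] at sum_sq
    exact ⟨c, ⟨rfl, by linarith⟩, rfl⟩

/-- F_8 has exactly 2160 elements: a simple family graph of a real weak del Pezzo
surface has at most 2160 vertices. -/
theorem stmt_12 : (Fset 8).ncard = 2160 := by
  calc
    (Fset 8).ncard = (e8Shell 36).ncard := (bijOn_e8Coords (-2) 0).ncard_eq
    _ = 2160 := ncard_e8Shell_thirtySix
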